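/- The control function (x,y) ↦ l(x,y) is a continuous function on ℝ^d × ℝ^d. -/

import Mathlib

open scoped BigOperators
open MeasureTheory

noncomputable section

/-- A path `φ : ℝ → ℝ^d` is piecewise `C¹` on `[0,1]` if it is continuous on `[0,1]`
and there is a finite partition `0 = t₀ < t₁ < ⋯ < tₙ = 1` such that `φ` is `C¹` on
each subinterval `[tᵢ, tᵢ₊₁]`. -/
def PiecewiseC1 {d : ℕ} (φ : ℝ → EuclideanSpace ℝ (Fin d)) : Prop :=
  ContinuousOn φ (Set.Icc 0 1) ∧
  ∃ (n : ℕ) (t : Fin (n + 1) → ℝ), StrictMono t ∧ t 0 = 0 ∧ t (Fin.last n) = 1 ∧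
    ∀ i : Fin n, ContDiffOn ℝ 1 φ (Set.Icc (t i.castSucc) (t i.succ))

/-- The action `S(φ) = ∫₀¹ L(φ(t), φ'(t)) dt` of a path. -/
def action {d : ℕ} (L : EuclideanSpace ℝ (Fin d) → EuclideanSpace ℝ (Fin d) → ℝ)
    (φ : ℝ → EuclideanSpace ℝ (Fin d)) : ℝ :=
  ∫ t in (0:ℝ)..1, L (φ t) (deriv φ t)

/-- The set of actions of piecewise `C¹` paths from `x` to `y`. -/
def actionSet {d : ℕ} (L : EuclideanSpace ℝ (Fin d) → EuclideanSpace ℝ (Fin d) → ℝ)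
    (x y : EuclideanSpace ℝ (Fin d)) : Set ℝ :=
  {a | ∃ φ : ℝ → EuclideanSpace ℝ (Fin d),
    PiecewiseC1 φ ∧ φ 0 = x ∧ φ 1 = y ∧ action L φ = a}

/-- The control function `l(x,y) = inf { S(φ) : φ piecewise C¹, φ(0) = x, φ(1) = y }`. -/
def controlFn {d : ℕ} (L : EuclideanSpace ℝ (Fin d) → EuclideanSpace ℝ (Fin d) → ℝ)
    (x y : EuclideanSpace ℝ (Fin d)) : ℝ :=
  sInf (actionSet L x y)


lemma part_find {n : ℕ} {t : Fin (n + 1) → ℝ} (h0 : t 0 = 0) (h1 : t (Fin.last n) = 1)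
    {a : ℝ} (ha : 0 ≤ a) (ha1 : a < 1) : ∃ i : Fin n, t i.castSucc ≤ a ∧ a < t i.succ := by
  by_contra hcon
  push Not at hcon
  have : ∀ i : Fin (n + 1), t i ≤ a := by
    intro i
    induction i using Fin.induction with
    | zero => rw [h0]; exact ha
    | succ i ih => exact hcon i ih
  have := this (Fin.last n)
  rw [h1] at this
  linarith

lemma pc1_of_finset {d : ℕ} {φ : ℝ → EuclideanSpace ℝ (Fin d)}
    (hc : ContinuousOn φ (Set.Icc 0 1)) (F : Finset ℝ)
    (hF : ∀ a b : ℝ, 0 ≤ a → a < b → b ≤ 1 → (∀ t ∈ F, t ∉ Set.Ioo a b) →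
      ContDiffOn ℝ 1 φ (Set.Icc a b)) : PiecewiseC1 φ := by
  classical
  refine ⟨hc, ?_⟩
  set G : Finset ℝ := insert 0 (insert 1 (F.filter fun t => t ∈ Set.Icc (0:ℝ) 1)) with hG
  have hG0 : (0:ℝ) ∈ G := by simp [hG]
  have hG1 : (1:ℝ) ∈ G := by simp [hG]
  have hGI : ∀ t ∈ G, 0 ≤ t ∧ t ≤ 1 := by
    intro t ht
    simp only [hG, Finset.mem_insert, Finset.mem_filter, Set.mem_Icc] at ht
    rcases ht with rfl | rfl | ⟨_, h⟩
    · norm_num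
    · norm_num
    · exact h
  have hpos : 0 < G.card := Finset.card_pos.mpr ⟨0, hG0⟩
  obtain ⟨n, hn⟩ : ∃ n, G.card = n + 1 := ⟨G.card - 1, by omega⟩
  have hr := G.range_orderEmbOfFin hn
  have hmem : ∀ i, G.orderEmbOfFin hn i ∈ G := fun i => G.orderEmbOfFin_mem hn i
  have hsur : ∀ x ∈ G, ∃ i, G.orderEmbOfFin hn i = x := by
    intro x hx
    have : x ∈ Set.range (G.orderEmbOfFin hn) := by rw [hr]; exact hx
    exact this
  refine ⟨n, G.orderEmbOfFin hn, (G.orderEmbOfFin hn).strictMono, ?_, ?_, ?_⟩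
  · obtain ⟨i, hi⟩ := hsur 0 hG0
    have h1 := (G.orderEmbOfFin hn).monotone (Fin.zero_le i)
    rw [hi] at h1
    exact le_antisymm h1 (hGI _ (hmem _)).1
  · obtain ⟨i, hi⟩ := hsur 1 hG1
    have h1 := (G.orderEmbOfFin hn).monotone (Fin.le_last i)
    rw [hi] at h1
    exact le_antisymm (hGI _ (hmem _)).2 h1
  · intro i
    refine hF _ _ (hGI _ (hmem _)).1 ((G.orderEmbOfFin hn).strictMono (Fin.castSucc_lt_succ))
      (hGI _ (hmem _)).2 ?_
    intro t ht hti
    have h1 := (hGI _ (hmem i.castSucc)).1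
    have h2 := (hGI _ (hmem i.succ)).2
    have htG : t ∈ G := by
      simp only [hG, Finset.mem_insert, Finset.mem_filter, Set.mem_Icc]
      exact Or.inr (Or.inr ⟨ht, by linarith [hti.1], by linarith [hti.2]⟩)
    obtain ⟨j, rfl⟩ := hsur t htG
    have h3 := (G.orderEmbOfFin hn).lt_iff_lt.mp hti.1
    have h4 := (G.orderEmbOfFin hn).lt_iff_lt.mp hti.2
    simp only [Fin.lt_def, Fin.val_castSucc, Fin.val_succ] at h3 h4
    omega

lemma pc1_finset {d : ℕ} {φ : ℝ → EuclideanSpace ℝ (Fin d)} (h : PiecewiseC1 φ) :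
    ∃ F : Finset ℝ, ∀ a b : ℝ, 0 ≤ a → a < b → b ≤ 1 → (∀ t ∈ F, t ∉ Set.Ioo a b) →
      ContDiffOn ℝ 1 φ (Set.Icc a b) := by
  classical
  obtain ⟨hc, n, t, hm, h0, h1, hd⟩ := h
  refine ⟨Finset.univ.image t, ?_⟩
  intro a b ha hab hb hF
  obtain ⟨i, hi1, hi2⟩ := part_find h0 h1 ha (by linarith)
  refine (hd i).mono (Set.Icc_subset_Icc hi1 ?_)
  by_contra hcon
  exact hF (t i.succ) (by simp) ⟨hi2, by linarith⟩

lemma pc1_data {d : ℕ} {φ : ℝ → EuclideanSpace ℝ (Fin d)} (h : PiecewiseC1 φ) :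
    ∃ (F : Finset ℝ) (K : ℝ), ∀ t ∈ Set.Ioo (0:ℝ) 1, t ∉ F →
      DifferentiableAt ℝ φ t ∧ ‖deriv φ t‖ ≤ K := by
  classical
  obtain ⟨hc, n, t, hm, h0, h1, hd⟩ := h
  have hK : ∀ i : Fin n, ∃ K, ∀ s ∈ Set.Icc (t i.castSucc) (t i.succ),
      ‖derivWithin φ (Set.Icc (t i.castSucc) (t i.succ)) s‖ ≤ K := by
    intro i
    have hlt : t i.castSucc < t i.succ := hm (Fin.castSucc_lt_succ)
    exact isCompact_Icc.exists_bound_of_continuousOn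
      ((hd i).continuousOn_derivWithin (uniqueDiffOn_Icc hlt) le_rfl)
  choose K hK using hK
  refine ⟨Finset.univ.image t, ∑ i, |K i|, ?_⟩
  intro s hs hsF
  obtain ⟨i, hi1, hi2⟩ := part_find h0 h1 hs.1.le hs.2
  have hne : t i.castSucc ≠ s := by
    intro h
    exact hsF (by rw [← h]; simp)
  have hn : Set.Icc (t i.castSucc) (t i.succ) ∈ nhds s :=
    Icc_mem_nhds (lt_of_le_of_ne hi1 hne) hi2
  have hmem := mem_of_mem_nhds hn
  refine ⟨(((hd i) s hmem).differentiableWithinAt (by norm_num)).differentiableAt hn, ?_⟩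
  have := hK i s hmem
  rw [derivWithin_of_mem_nhds hn] at this
  calc _ ≤ K i := this
    _ ≤ |K i| := le_abs_self _
    _ ≤ _ := Finset.single_le_sum (f := fun i => |K i|) (fun i _ => abs_nonneg _) (Finset.mem_univ i)

lemma pc1_integrable {d : ℕ} {φ : ℝ → EuclideanSpace ℝ (Fin d)} (h : PiecewiseC1 φ)
    {V : Type*} [NormedAddCommGroup V] [SecondCountableTopology V]
    {G : EuclideanSpace ℝ (Fin d) × EuclideanSpace ℝ (Fin d) → V} (hG : Continuous G)
    {a b : ℝ} (ha : 0 ≤ a) (hab : a ≤ b) (hb : b ≤ 1) :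
    IntervalIntegrable (fun t => G (φ t, deriv φ t)) volume a b := by
  suffices H : IntervalIntegrable (fun t => G (φ t, deriv φ t)) volume 0 1 by
    apply H.mono_set
    rw [Set.uIcc_of_le hab, Set.uIcc_of_le zero_le_one]
    exact Set.Icc_subset_Icc ha hb
  obtain ⟨F, K, hFK⟩ := pc1_data h
  have hc := h.1
  have hcomp : IsCompact ((φ '' Set.Icc 0 1) ×ˢ Metric.closedBall (0 : EuclideanSpace ℝ (Fin d)) K) :=
    (isCompact_Icc.image_of_continuousOn hc).prod (isCompact_closedBall _ _)
  obtain ⟨B, hB⟩ := hcomp.exists_bound_of_continuousOn hG.continuousOn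
  rw [intervalIntegrable_iff_integrableOn_Icc_of_le zero_le_one]
  refine Integrable.of_bound (C := B) ?_ ?_
  · have hm : AEStronglyMeasurable (fun t => (φ t, deriv φ t)) (volume.restrict (Set.Icc (0:ℝ) 1)) :=
      (hc.aestronglyMeasurable measurableSet_Icc).prodMk
        (measurable_deriv φ).aestronglyMeasurable
    exact hG.comp_aestronglyMeasurable hm
  · have hF0 : ∀ᵐ t ∂(volume : Measure ℝ), t ∉ ((insert 0 (insert 1 F) : Finset ℝ) : Set ℝ) :=
      (Finset.countable_toSet _).ae_notMem _
    filter_upwards [ae_restrict_mem measurableSet_Icc, ae_restrict_of_ae hF0] with t ht htF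
    simp only [Finset.coe_insert, Set.mem_insert_iff, Finset.mem_coe, not_or] at htF
    obtain ⟨_, h2⟩ := hFK t ⟨lt_of_le_of_ne ht.1 (Ne.symm htF.1), lt_of_le_of_ne ht.2 htF.2.1⟩ htF.2.2
    exact hB _ ⟨⟨t, ht, rfl⟩, by simpa using h2⟩

lemma pc1_dist {d : ℕ} {φ : ℝ → EuclideanSpace ℝ (Fin d)} (h : PiecewiseC1 φ)
    {a b : ℝ} (ha : 0 ≤ a) (hab : a ≤ b) (hb : b ≤ 1) :
    ‖φ b - φ a‖ ≤ ∫ t in a..b, ‖deriv φ t‖ := by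
  obtain ⟨F, K, hFK⟩ := pc1_data h
  rw [← MeasureTheory.integral_eq_of_hasDerivAt_off_countable_of_le φ (deriv φ) hab
    F.countable_toSet (h.1.mono (Set.Icc_subset_Icc ha hb)) ?_
    (pc1_integrable h continuous_snd ha hab hb)]
  · exact intervalIntegral.norm_integral_le_integral_norm hab
  · intro x hx
    exact (hFK x ⟨by linarith [hx.1.1], by linarith [hx.1.2]⟩ hx.2).1.hasDerivAt

lemma young_aux {q s u : ℝ} (hq : 1 < q) (hs : 0 < s) (hu : 0 ≤ u) :
    u ≤ s + s ^ (1 - q) * u ^ q := by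
  rcases le_or_gt u s with h | h
  · have : 0 ≤ s ^ (1 - q) * u ^ q := by positivity
    linarith
  · have hu0 : 0 < u := hs.trans h
    have h1 : s ^ (q - 1) ≤ u ^ (q - 1) := Real.rpow_le_rpow hs.le h.le (by linarith)
    have h2 : u ^ q = u ^ (q - 1) * u := by
      rw [← Real.rpow_add_one hu0.ne']; ring_nf
    have h3 : s ^ (1 - q) * s ^ (q - 1) = 1 := by
      rw [← Real.rpow_add hs]; simp
    have h4 : s ^ (1 - q) * s ^ (q - 1) ≤ s ^ (1 - q) * u ^ (q - 1) := by gcongr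
    rw [h2]
    nlinarith

lemma speed_bound {d : ℕ} {φ : ℝ → EuclideanSpace ℝ (Fin d)} (h : PiecewiseC1 φ)
    {q s : ℝ} (hq : 1 < q) (hs : 0 < s)
    {a b : ℝ} (ha : 0 ≤ a) (hab : a ≤ b) (hb : b ≤ 1) :
    ‖φ b - φ a‖ ≤ s * (b - a) + s ^ (1 - q) * ∫ t in a..b, ‖deriv φ t‖ ^ q := by
  refine (pc1_dist h ha hab hb).trans ?_
  have hi : IntervalIntegrable (fun t => ‖deriv φ t‖ ^ q) volume a b :=
    pc1_integrable h (G := fun p => ‖p.2‖ ^ q)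
      (continuous_snd.norm.rpow_const (fun _ => Or.inr (by linarith))) ha hab hb
  have hi1 : IntervalIntegrable (fun t => ‖deriv φ t‖) volume a b :=
    pc1_integrable h (G := fun p => ‖p.2‖) continuous_snd.norm ha hab hb
  calc ∫ t in a..b, ‖deriv φ t‖ ≤ ∫ t in a..b, (s + s ^ (1 - q) * ‖deriv φ t‖ ^ q) := by
        apply intervalIntegral.integral_mono_on hab hi1
          (intervalIntegrable_const.add (hi.const_mul _))
        intro t _
        exact young_aux hq hs (norm_nonneg _)
    _ = _ := by
        rw [intervalIntegral.integral_add intervalIntegrable_const (hi.const_mul _),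
          intervalIntegral.integral_const, intervalIntegral.integral_const_mul, smul_eq_mul, mul_comm s]

lemma energy_integrable {d : ℕ} {φ : ℝ → EuclideanSpace ℝ (Fin d)} (h : PiecewiseC1 φ)
    {q : ℝ} (hq : 1 < q) {a b : ℝ} (ha : 0 ≤ a) (hab : a ≤ b) (hb : b ≤ 1) :
    IntervalIntegrable (fun t => ‖deriv φ t‖ ^ q) volume a b :=
  pc1_integrable h (G := fun p => ‖p.2‖ ^ q)
      (continuous_snd.norm.rpow_const (fun _ => Or.inr (by linarith))) ha hab hb

lemma energy_mono {d : ℕ} {φ : ℝ → EuclideanSpace ℝ (Fin d)} (h : PiecewiseC1 φ)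
    {q : ℝ} (hq : 1 < q) {a b : ℝ} (ha : 0 ≤ a) (hab : a ≤ b) (hb : b ≤ 1) :
    ∫ t in a..b, ‖deriv φ t‖ ^ q ≤ ∫ t in (0:ℝ)..1, ‖deriv φ t‖ ^ q := by
  refine intervalIntegral.integral_mono_interval ha hab hb ?_
    (energy_integrable h hq le_rfl zero_le_one le_rfl)
  exact Filter.Eventually.of_forall fun t => by positivity

lemma key_dist {d : ℕ} {φ : ℝ → EuclideanSpace ℝ (Fin d)} (h : PiecewiseC1 φ)
    {q a M r ε s : ℝ} (hq : 1 < q) (ha : 0 < a) (hM : 0 < M) (hr : 0 < r) (hr1 : r < 1)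
    (hra : r ^ (q - 1) = a / M) (hE : ∫ t in (0:ℝ)..1, ‖deriv φ t‖ ^ q ≤ M)
    (hε : 0 < ε) (hε1 : ε < 1) (hEa : ∫ t in (ε * r)..ε, ‖deriv φ t‖ ^ q ≤ a)
    (hs : 0 < s) (hsa : s ^ q * ε = a) {x : EuclideanSpace ℝ (Fin d)}
    (hx : ‖x - φ 0‖ ≤ s * ε) : ‖φ ε - x‖ ≤ 5 * s * ε := by
  have hrε : ε * r ≤ ε := by nlinarith
  have hrε0 : 0 < ε * r := by positivity
  have h1 := speed_bound h hq (div_pos hs hr) le_rfl hrε0.le (by linarith)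
  have h2 := speed_bound h hq hs hrε0.le hrε hε1.le
  have e1 : s ^ (1 - q) * a = s * ε := by
    rw [← hsa, ← mul_assoc, ← Real.rpow_add hs]; simp
  have e2 : (s / r) ^ (1 - q) * M = s * ε := by
    rw [Real.div_rpow hs.le hr.le, show (1 - q) = -(q - 1) by ring, Real.rpow_neg hr.le, hra,
      ← e1, show (1 - q) = -(q - 1) by ring]
    field_simp
  have h3 : (s / r) ^ (1 - q) * ∫ t in (0:ℝ)..(ε * r), ‖deriv φ t‖ ^ q ≤ s * ε := by
    rw [← e2]
    gcongr
    exact (energy_mono h hq le_rfl hrε0.le (by linarith)).trans hE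
  have h4 : s ^ (1 - q) * ∫ t in (ε * r)..ε, ‖deriv φ t‖ ^ q ≤ s * ε := by
    rw [← e1]
    gcongr
  have h5 : s / r * (ε * r - 0) = s * ε := by field_simp; ring
  have h6 : 0 < s * (ε * r) := by positivity
  have h7 : φ ε - x = (φ ε - φ (ε * r)) + (φ (ε * r) - φ 0) - (x - φ 0) := by abel
  have h8 : ‖φ ε - x‖ ≤ ‖φ ε - φ (ε * r)‖ + ‖φ (ε * r) - φ 0‖ + ‖x - φ 0‖ := by
    rw [h7]
    exact (norm_sub_le _ _).trans (by gcongr; exact norm_add_le _ _)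
  nlinarith

lemma scale_exists {d : ℕ} {φ : ℝ → EuclideanSpace ℝ (Fin d)} (h : PiecewiseC1 φ)
    {q a M r ε : ℝ} {N : ℕ} (hq : 1 < q) (hr : 0 < r) (hr1 : r < 1)
    (hE : ∫ t in (0:ℝ)..1, ‖deriv φ t‖ ^ q ≤ M) (hN : M < N * a)
    (hε : 0 < ε) (hε1 : ε < 1) :
    ∃ j < N, ∫ t in (ε * r ^ j * r)..(ε * r ^ j), ‖deriv φ t‖ ^ q ≤ a := by
  by_contra hcon
  push Not at hcon
  have hpow : ∀ j : ℕ, 0 < ε * r ^ j ∧ ε * r ^ j ≤ ε := by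
    intro j
    refine ⟨by positivity, ?_⟩
    have := pow_le_one₀ hr.le hr1.le (n := j)
    nlinarith
  have hstep : ∀ j : ℕ, ε * r ^ (j + 1) ≤ ε * r ^ j := by
    intro j
    have := (hpow j).1
    rw [pow_succ, ← mul_assoc]; nlinarith
  have hs := intervalIntegral.sum_integral_adjacent_intervals (μ := volume)
    (f := fun t => ‖deriv φ t‖ ^ q) (a := fun j => ε * r ^ j) (n := N)
    (fun j _ => (energy_integrable h hq (hpow (j+1)).1.le (hstep j)
      (by linarith [(hpow j).2])).symm)
  have h1 : ∑ j ∈ Finset.range N, a ≤ ∑ j ∈ Finset.range N,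
      (-∫ t in (ε * r ^ j)..(ε * r ^ (j + 1)), ‖deriv φ t‖ ^ q) := by
    apply Finset.sum_le_sum
    intro j hj
    rw [← intervalIntegral.integral_symm, pow_succ, ← mul_assoc]
    exact (hcon j (Finset.mem_range.mp hj)).le
  rw [Finset.sum_neg_distrib, hs, ← intervalIntegral.integral_symm] at h1
  have h2 := energy_mono h hq (hpow N).1.le (by simpa using (hpow N).2)
    (show ε * r ^ 0 ≤ 1 by simpa using hε1.le)
  simp only [Finset.sum_const, Finset.card_range, nsmul_eq_mul] at h1
  linarith

lemma line_pc1 {d : ℕ} (x y : EuclideanSpace ℝ (Fin d)) :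
    PiecewiseC1 (fun t : ℝ => x + t • (y - x)) := by
  have : ContDiff ℝ 1 (fun t : ℝ => x + t • (y - x)) := by fun_prop
  exact pc1_of_finset this.continuous.continuousOn ∅ fun _ _ _ _ _ _ => this.contDiffOn

lemma line_deriv {d : ℕ} (x v : EuclideanSpace ℝ (Fin d)) (t : ℝ) :
    deriv (fun t : ℝ => x + t • v) t = v := by
  have : HasDerivAt (fun t : ℝ => x + t • v) ((1:ℝ) • v) t :=
    ((hasDerivAt_id t).smul_const v).const_add x
  rw [this.deriv, one_smul]

lemma action_lower {d : ℕ} {L : EuclideanSpace ℝ (Fin d) → EuclideanSpace ℝ (Fin d) → ℝ}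
    (hLcont : Continuous fun p : EuclideanSpace ℝ (Fin d) × EuclideanSpace ℝ (Fin d) => L p.1 p.2)
    {c₁ C q : ℝ} (hq : 1 < q)
    (hlow : ∀ x p : EuclideanSpace ℝ (Fin d), c₁ * ‖p‖ ^ q - C ≤ L x p)
    {φ : ℝ → EuclideanSpace ℝ (Fin d)} (h : PiecewiseC1 φ) :
    c₁ * (∫ t in (0:ℝ)..1, ‖deriv φ t‖ ^ q) - C ≤ action L φ := by
  have hi := energy_integrable h hq le_rfl zero_le_one le_rfl
  have : ∫ t in (0:ℝ)..1, (c₁ * ‖deriv φ t‖ ^ q - C) ≤ action L φ := by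
    apply intervalIntegral.integral_mono_on zero_le_one
      ((hi.const_mul _).sub intervalIntegrable_const)
      (pc1_integrable h hLcont le_rfl zero_le_one le_rfl)
    intro t _
    exact hlow _ _
  rw [intervalIntegral.integral_sub (hi.const_mul _) intervalIntegrable_const,
    intervalIntegral.integral_const_mul, intervalIntegral.integral_const] at this
  simpa using this

lemma surgery {d : ℕ} {L : EuclideanSpace ℝ (Fin d) → EuclideanSpace ℝ (Fin d) → ℝ}
    (hLcont : Continuous fun p : EuclideanSpace ℝ (Fin d) × EuclideanSpace ℝ (Fin d) => L p.1 p.2)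
    {c₁ c₂ C q : ℝ} (hc₁ : 0 < c₁)
    (hlow : ∀ x p : EuclideanSpace ℝ (Fin d), c₁ * ‖p‖ ^ q - C ≤ L x p)
    (hup : ∀ x p : EuclideanSpace ℝ (Fin d), L x p ≤ c₂ * ‖p‖ ^ q + C)
    {φ : ℝ → EuclideanSpace ℝ (Fin d)} (h : PiecewiseC1 φ) {ε : ℝ} (hε : 0 < ε) (hε1 : ε < 1)
    (x : EuclideanSpace ℝ (Fin d)) :
    ∃ ψ : ℝ → EuclideanSpace ℝ (Fin d), PiecewiseC1 ψ ∧ ψ 0 = x ∧ ψ 1 = φ 1 ∧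
      action L ψ ≤ action L φ + ε * (c₂ * (‖φ ε - x‖ / ε) ^ q + C) + ε * C := by
  classical
  set v : EuclideanSpace ℝ (Fin d) := ε⁻¹ • (φ ε - x) with hv
  set ℓ : ℝ → EuclideanSpace ℝ (Fin d) := fun t => x + t • v with hℓ
  have hℓc : ContDiff ℝ 1 ℓ := by fun_prop
  have hℓε : ℓ ε = φ ε := by
    simp only [hℓ, hv, smul_smul, mul_inv_cancel₀ hε.ne', one_smul]; abel
  set ψ : ℝ → EuclideanSpace ℝ (Fin d) := fun t => if t ≤ ε then ℓ t else φ t with hψ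
  have hψ1 : ∀ t, t ≤ ε → ψ t = ℓ t := fun t ht => by simp [hψ, ht]
  have hψ2 : ∀ t, ε ≤ t → ψ t = φ t := by
    intro t ht
    rcases ht.eq_or_lt with rfl | ht
    · rw [hψ1 _ le_rfl, hℓε]
    · simp [hψ, not_le.mpr ht]
  obtain ⟨F, hF⟩ := pc1_finset h
  have hcont : ContinuousOn ψ (Set.Icc 0 1) := by
    have h1 : ContinuousOn ψ (Set.Icc 0 ε) :=
      hℓc.continuous.continuousOn.congr fun t ht => hψ1 t ht.2
    have h2 : ContinuousOn ψ (Set.Icc ε 1) :=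
      (h.1.mono (Set.Icc_subset_Icc hε.le le_rfl)).congr fun t ht => hψ2 t ht.1
    rw [← Set.Icc_union_Icc_eq_Icc hε.le hε1.le]
    exact h1.union_of_isClosed h2 isClosed_Icc isClosed_Icc
  have hpc : PiecewiseC1 ψ := by
    refine pc1_of_finset hcont (insert ε F) ?_
    intro a b ha hab hb hn
    have hne := hn ε (by simp)
    by_cases hbε : b ≤ ε
    · exact hℓc.contDiffOn.congr fun t ht => hψ1 t (ht.2.trans hbε)
    · have haε : ε ≤ a := by
        by_contra hcon
        exact hne ⟨by linarith, by linarith⟩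
      exact (hF a b ha hab hb fun t ht => hn t (by simp [ht])).congr
        fun t ht => hψ2 t (haε.trans ht.1)
  refine ⟨ψ, hpc, ?_, hψ2 1 hε1.le, ?_⟩
  · rw [hψ1 0 hε.le]; simp [hℓ]
  have iψ1 := pc1_integrable hpc hLcont le_rfl hε.le hε1.le
  have iψ2 := pc1_integrable hpc hLcont hε.le hε1.le le_rfl
  have iφ1 := pc1_integrable h hLcont le_rfl hε.le hε1.le
  have iφ2 := pc1_integrable h hLcont hε.le hε1.le le_rfl
  have sψ := intervalIntegral.integral_add_adjacent_intervals iψ1 iψ2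
  have sφ := intervalIntegral.integral_add_adjacent_intervals iφ1 iφ2
  have heq : ∫ t in ε..1, L (ψ t) (deriv ψ t) = ∫ t in ε..1, L (φ t) (deriv φ t) := by
    apply intervalIntegral.integral_congr_Ioo_of_le hε1.le
    intro t ht
    have : ψ =ᶠ[nhds t] φ := by
      filter_upwards [Ioi_mem_nhds ht.1] with u hu using hψ2 u (le_of_lt hu)
    simp only [this.deriv_eq, hψ2 t ht.1.le]
  have hub : ∫ t in (0:ℝ)..ε, L (ψ t) (deriv ψ t) ≤
      ∫ t in (0:ℝ)..ε, (c₂ * (‖φ ε - x‖ / ε) ^ q + C) := by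
    apply intervalIntegral.integral_mono_on_of_le_Ioo hε.le iψ1 intervalIntegrable_const
    intro t ht
    have : ψ =ᶠ[nhds t] ℓ := by
      filter_upwards [Iio_mem_nhds ht.2] with u hu using hψ1 u (le_of_lt hu)
    rw [this.deriv_eq, hℓ, line_deriv]
    refine (hup _ _).trans_eq ?_
    rw [hv, norm_smul, Real.norm_of_nonneg (by positivity), div_eq_inv_mul]
  have hlb : ∫ t in (0:ℝ)..ε, (-C) ≤ ∫ t in (0:ℝ)..ε, L (φ t) (deriv φ t) := by
    apply intervalIntegral.integral_mono_on hε.le intervalIntegrable_const iφ1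
    intro t _
    have h1 := hlow (φ t) (deriv φ t)
    have h2 : 0 ≤ c₁ * ‖deriv φ t‖ ^ q := by positivity
    linarith
  rw [intervalIntegral.integral_const, smul_eq_mul, sub_zero] at hub hlb
  unfold action
  simp only at sψ sφ
  rw [← sψ, ← sφ, heq]
  linarith

lemma actionSet_bdd {d : ℕ} {L : EuclideanSpace ℝ (Fin d) → EuclideanSpace ℝ (Fin d) → ℝ}
    (hLcont : Continuous fun p : EuclideanSpace ℝ (Fin d) × EuclideanSpace ℝ (Fin d) => L p.1 p.2)
    {c₁ C q : ℝ} (hq : 1 < q) (hc₁ : 0 < c₁)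
    (hlow : ∀ x p : EuclideanSpace ℝ (Fin d), c₁ * ‖p‖ ^ q - C ≤ L x p)
    (x y : EuclideanSpace ℝ (Fin d)) : BddBelow (actionSet L x y) := by
  refine ⟨-C, ?_⟩
  rintro _ ⟨φ, h, _, _, rfl⟩
  have h1 := action_lower hLcont hq hlow h
  have h2 : 0 ≤ ∫ t in (0:ℝ)..1, ‖deriv φ t‖ ^ q :=
    intervalIntegral.integral_nonneg zero_le_one fun t _ => by positivity
  have := mul_nonneg hc₁.le h2
  linarith

lemma actionSet_nonempty {d : ℕ} (L : EuclideanSpace ℝ (Fin d) → EuclideanSpace ℝ (Fin d) → ℝ)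
    (x y : EuclideanSpace ℝ (Fin d)) : (actionSet L x y).Nonempty :=
  ⟨_, _, line_pc1 x y, by simp, by simp, rfl⟩

lemma control_upper {d : ℕ} {L : EuclideanSpace ℝ (Fin d) → EuclideanSpace ℝ (Fin d) → ℝ}
    (hLcont : Continuous fun p : EuclideanSpace ℝ (Fin d) × EuclideanSpace ℝ (Fin d) => L p.1 p.2)
    {c₁ c₂ C q : ℝ} (hq : 1 < q) (hc₁ : 0 < c₁)
    (hlow : ∀ x p : EuclideanSpace ℝ (Fin d), c₁ * ‖p‖ ^ q - C ≤ L x p)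
    (hup : ∀ x p : EuclideanSpace ℝ (Fin d), L x p ≤ c₂ * ‖p‖ ^ q + C)
    (x y : EuclideanSpace ℝ (Fin d)) : controlFn L x y ≤ c₂ * ‖y - x‖ ^ q + C := by
  refine (csInf_le (actionSet_bdd hLcont hq hc₁ hlow x y)
    ⟨_, line_pc1 x y, by simp, by simp, rfl⟩).trans ?_
  have : action L (fun t : ℝ => x + t • (y - x)) ≤ ∫ t in (0:ℝ)..1, (c₂ * ‖y - x‖ ^ q + C) := by
    apply intervalIntegral.integral_mono_on zero_le_one
      (pc1_integrable (line_pc1 x y) hLcont le_rfl zero_le_one le_rfl) intervalIntegrable_const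
    intro t _
    rw [line_deriv]
    exact hup _ _
  simpa using this

lemma control_left {d : ℕ} {L : EuclideanSpace ℝ (Fin d) → EuclideanSpace ℝ (Fin d) → ℝ}
    (hLcont : Continuous fun p : EuclideanSpace ℝ (Fin d) × EuclideanSpace ℝ (Fin d) => L p.1 p.2)
    {c₁ c₂ C q : ℝ} (hq : 1 < q) (hc₁ : 0 < c₁) (hc₂ : 0 < c₂) (hC : 0 < C)
    (hlow : ∀ x p : EuclideanSpace ℝ (Fin d), c₁ * ‖p‖ ^ q - C ≤ L x p)
    (hup : ∀ x p : EuclideanSpace ℝ (Fin d), L x p ≤ c₂ * ‖p‖ ^ q + C)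
    {R η : ℝ} (hR : 0 ≤ R) (hη : 0 < η) :
    ∃ δ > 0, ∀ x x' y : EuclideanSpace ℝ (Fin d), ‖y - x'‖ ≤ R → ‖x - x'‖ ≤ δ →
      controlFn L x y ≤ controlFn L x' y + η := by
  obtain ⟨a, ha⟩ : ∃ a, a = η / (8 * (c₂ * 5 ^ q)) := ⟨_, rfl⟩
  have ha0 : 0 < a := by rw [ha]; positivity
  have ha8 : c₂ * 5 ^ q * a = η / 8 := by
    rw [ha]
    have : (0:ℝ) < 5 ^ q := by positivity
    field_simp
  obtain ⟨M, hM⟩ : ∃ M, M = (c₂ * R ^ q + C + 1 + C) / c₁ + a := ⟨_, rfl⟩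
  have hM1 : 0 < (c₂ * R ^ q + C + 1 + C) / c₁ := by positivity
  have hM0 : 0 < M := by linarith
  obtain ⟨r, hr⟩ : ∃ r, r = (a / M) ^ (1 / (q - 1)) := ⟨_, rfl⟩
  have hq1 : 0 < q - 1 := by linarith
  have hr0 : 0 < r := by rw [hr]; positivity
  have hr1 : r < 1 := by
    rw [hr]
    apply Real.rpow_lt_one (by positivity) _ (by positivity)
    rw [div_lt_one hM0]; linarith
  have hra : r ^ (q - 1) = a / M := by
    rw [hr, ← Real.rpow_mul (by positivity), one_div_mul_cancel hq1.ne', Real.rpow_one]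
  obtain ⟨N, hN⟩ := exists_nat_gt (M / a)
  have hN' : M < N * a := by rwa [div_lt_iff₀ ha0] at hN
  obtain ⟨e, he⟩ : ∃ e, e = min (1 / 2) (η / (8 * C)) := ⟨_, rfl⟩
  have he0 : 0 < e := by rw [he]; positivity
  have he1 : e < 1 := by
    have : e ≤ 1 / 2 := by rw [he]; exact min_le_left _ _
    linarith
  have heC : e * C ≤ η / 8 := by
    have : e ≤ η / (8 * C) := by rw [he]; exact min_le_right _ _
    calc e * C ≤ η / (8 * C) * C := by gcongr
      _ = η / 8 := by field_simp
  refine ⟨(a / e) ^ (1 / q) * (e * r ^ N), by positivity, ?_⟩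
  intro x x' y hy hx
  obtain ⟨_, ⟨φ, hφ, hφ0, hφ1, rfl⟩, hlt⟩ := exists_lt_of_csInf_lt (actionSet_nonempty L x' y)
    (show sInf (actionSet L x' y) < controlFn L x' y + min (η / 2) 1 by
      have : 0 < min (η / 2) 1 := by positivity
      unfold controlFn; linarith)
  have hE : ∫ t in (0:ℝ)..1, ‖deriv φ t‖ ^ q ≤ M := by
    have h1 := action_lower hLcont hq hlow hφ
    have h2 := control_upper hLcont hq hc₁ hlow hup x' y
    have h3 : c₂ * ‖y - x'‖ ^ q ≤ c₂ * R ^ q := by gcongr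
    have h4 := min_le_right (η / 2) 1
    have h5 : (∫ t in (0:ℝ)..1, ‖deriv φ t‖ ^ q) ≤ (c₂ * R ^ q + C + 1 + C) / c₁ := by
      rw [le_div_iff₀ hc₁]; linarith
    linarith
  obtain ⟨j, hj, hja⟩ := scale_exists hφ hq hr0 hr1 hE hN' he0 he1
  obtain ⟨ε, hε⟩ : ∃ ε, ε = e * r ^ j := ⟨_, rfl⟩
  rw [← hε] at hja
  have hε0 : 0 < ε := by rw [hε]; positivity
  have hεe : ε ≤ e := by
    rw [hε]
    have := pow_le_one₀ hr0.le hr1.le (n := j)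
    nlinarith
  have hεN : e * r ^ N ≤ ε := by
    rw [hε]
    exact mul_le_mul_of_nonneg_left (pow_le_pow_of_le_one hr0.le hr1.le hj.le) he0.le
  obtain ⟨s, hs⟩ : ∃ s, s = (a / ε) ^ (1 / q) := ⟨_, rfl⟩
  have hs0 : 0 < s := by rw [hs]; positivity
  have hq0 : q ≠ 0 := by linarith
  have hsa : s ^ q * ε = a := by
    rw [hs, ← Real.rpow_mul (by positivity), one_div_mul_cancel hq0, Real.rpow_one]
    field_simp
  have hxs : ‖x - φ 0‖ ≤ s * ε := by
    rw [hφ0, hs]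
    refine hx.trans ?_
    gcongr
  have hd := key_dist hφ hq ha0 hM0 hr0 hr1 hra hE hε0 (by linarith) hja hs0 hsa hxs
  obtain ⟨ψ, hψ, hψ0, hψ1, hψa⟩ := surgery hLcont hc₁ hlow hup hφ hε0 (by linarith) x
  have h1 : controlFn L x y ≤ action L ψ :=
    csInf_le (actionSet_bdd hLcont hq hc₁ hlow x y) ⟨ψ, hψ, hψ0, hψ1.trans hφ1, rfl⟩
  have h2 : (‖φ ε - x‖ / ε) ^ q ≤ 5 ^ q * s ^ q := by
    rw [← Real.mul_rpow (by norm_num) hs0.le]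
    apply Real.rpow_le_rpow (by positivity) _ (by linarith)
    rwa [div_le_iff₀ hε0]
  have h3 : ε * (c₂ * (‖φ ε - x‖ / ε) ^ q) ≤ η / 8 := by
    calc _ ≤ ε * (c₂ * (5 ^ q * s ^ q)) := by gcongr
      _ = c₂ * 5 ^ q * (s ^ q * ε) := by ring
      _ = η / 8 := by rw [hsa, ha8]
  have h4 : ε * C ≤ η / 8 := le_trans (by gcongr) heC
  have h5 := min_le_left (η / 2) 1
  rw [mul_add] at hψa
  linarith

lemma rev_pc1 {d : ℕ} {φ : ℝ → EuclideanSpace ℝ (Fin d)} (h : PiecewiseC1 φ) :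
    PiecewiseC1 (fun t => φ (1 - t)) := by
  classical
  obtain ⟨F, hF⟩ := pc1_finset h
  refine pc1_of_finset ?_ (F.image fun t => 1 - t) ?_
  · refine h.1.comp (by fun_prop) ?_
    intro t ht
    exact ⟨by linarith [ht.2], by linarith [ht.1]⟩
  · intro a b ha hab hb hn
    have := hF (1 - b) (1 - a) (by linarith) (by linarith) (by linarith) ?_
    · refine this.comp (g := φ) (f := fun t => 1 - t) (by fun_prop) ?_
      intro t ht
      exact ⟨by linarith [ht.2], by linarith [ht.1]⟩
    · intro t ht hti
      exact hn (1 - t) (Finset.mem_image_of_mem _ ht) ⟨by linarith [hti.2], by linarith [hti.1]⟩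

lemma rev_action {d : ℕ} (L : EuclideanSpace ℝ (Fin d) → EuclideanSpace ℝ (Fin d) → ℝ)
    (φ : ℝ → EuclideanSpace ℝ (Fin d)) :
    action (fun x p => L x (-p)) (fun t => φ (1 - t)) = action L φ := by
  unfold action
  have := intervalIntegral.integral_comp_sub_left (a := 0) (b := 1)
    (fun t => L (φ t) (deriv φ t)) 1
  simp only [sub_self, sub_zero] at this
  rw [← this]
  simp only [deriv_comp_const_sub, neg_neg]

lemma rev_subset {d : ℕ} (L : EuclideanSpace ℝ (Fin d) → EuclideanSpace ℝ (Fin d) → ℝ)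
    (x y : EuclideanSpace ℝ (Fin d)) :
    actionSet L x y ⊆ actionSet (fun x p => L x (-p)) y x := by
  rintro _ ⟨φ, h, h0, h1, rfl⟩
  exact ⟨_, rev_pc1 h, by simpa using h1, by simpa using h0, rev_action L φ⟩

lemma rev_control {d : ℕ} (L : EuclideanSpace ℝ (Fin d) → EuclideanSpace ℝ (Fin d) → ℝ)
    (x y : EuclideanSpace ℝ (Fin d)) :
    controlFn (fun x p => L x (-p)) y x = controlFn L x y := by
  unfold controlFn
  congr 1
  apply Set.Subset.antisymm
  · simpa using rev_subset (fun x p => L x (-p)) y x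
  · exact rev_subset L x y

/-- under the growth bounds `c₁|p|^q − C ≤ L(x,p) ≤ c₂|p|^q + C` with
`q = 2k/(2k−1)`, the control function `(x,y) ↦ l(x,y)` is continuous on `ℝ^d × ℝ^d`. -/
theorem control_continuous
    (d k : ℕ) (hk : 1 ≤ k)
    (L : EuclideanSpace ℝ (Fin d) → EuclideanSpace ℝ (Fin d) → ℝ)
    (hLcont : Continuous fun p : EuclideanSpace ℝ (Fin d) × EuclideanSpace ℝ (Fin d) =>
      L p.1 p.2)
    (c₁ c₂ C : ℝ) (hc₁ : 0 < c₁) (hc₂ : 0 < c₂) (hC : 0 < C)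
    (hlow : ∀ x p : EuclideanSpace ℝ (Fin d),
      c₁ * ‖p‖ ^ ((2 * k : ℝ) / (2 * k - 1)) - C ≤ L x p)
    (hup : ∀ x p : EuclideanSpace ℝ (Fin d),
      L x p ≤ c₂ * ‖p‖ ^ ((2 * k : ℝ) / (2 * k - 1)) + C) :
    Continuous fun q : EuclideanSpace ℝ (Fin d) × EuclideanSpace ℝ (Fin d) =>
      controlFn L q.1 q.2 := by
  have hk' : (1:ℝ) ≤ k := by exact_mod_cast hk
  have hq : 1 < (2 * k : ℝ) / (2 * k - 1) := by
    rw [lt_div_iff₀ (by linarith)]; linarith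
  generalize (2 * k : ℝ) / (2 * k - 1) = q at hq hlow hup
  rw [continuous_iff_continuousAt]
  rintro ⟨x₀, y₀⟩
  rw [Metric.continuousAt_iff]
  intro η hη
  have hR : 0 ≤ ‖y₀ - x₀‖ + 2 := by positivity
  obtain ⟨δ₁, hδ₁, H₁⟩ := control_left hLcont hq hc₁ hc₂ hC hlow hup hR
    (show 0 < η / 4 by positivity)
  obtain ⟨δ₂, hδ₂, H₂⟩ := control_left (L := fun x p => L x (-p))
    (hLcont.comp (continuous_fst.prodMk continuous_snd.neg)) hq hc₁ hc₂ hC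
    (fun x p => by simpa using hlow x (-p)) (fun x p => by simpa using hup x (-p)) hR
    (show 0 < η / 4 by positivity)
  simp only [rev_control] at H₂
  refine ⟨min 1 (min δ₁ δ₂), by positivity, ?_⟩
  rintro ⟨x, y⟩ hxy
  rw [Prod.dist_eq, max_lt_iff] at hxy
  simp only [dist_eq_norm, lt_min_iff] at hxy
  obtain ⟨⟨a1, a2, a3⟩, b1, b2, b3⟩ := hxy
  have n1 : ‖y - x‖ ≤ ‖y₀ - x₀‖ + 2 := by
    have : y - x = (y₀ - x₀) + (y - y₀) - (x - x₀) := by abel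
    rw [this]
    linarith [norm_sub_le ((y₀ - x₀) + (y - y₀)) (x - x₀), norm_add_le (y₀ - x₀) (y - y₀)]
  have n2 : ‖y - x₀‖ ≤ ‖y₀ - x₀‖ + 2 := by
    have : y - x₀ = (y₀ - x₀) + (y - y₀) := by abel
    rw [this]
    linarith [norm_add_le (y₀ - x₀) (y - y₀)]
  have e1 := H₁ x x₀ y n2 a2.le
  have e2 := H₁ x₀ x y n1 (by rw [norm_sub_rev]; exact a2.le)
  have e3 := H₂ y y₀ x₀ (by rw [norm_sub_rev]; linarith) b3.le
  have e4 := H₂ y₀ y x₀ (by rw [norm_sub_rev]; exact n2) (by rw [norm_sub_rev]; exact b3.le)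
  rw [Real.dist_eq, abs_lt]
  constructor <;> simp only <;> linarith
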